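/- arXiv:1001.1271 — 4 statements merged into one kernel-verified Lean document; each statement's English description precedes it below -/
import Mathlib

section
/- Let α > 1, let V ⊆ ℂ be an open connected set containing the interval [-1,1], and let φ, φ̃ : V → ℂ be univalent maps with φ(-1) = φ̃(-1) = -1 and φ(1) = φ̃(1) = 1. Let t, t̃ ∈ (0,1]. If φ(q_t(x)) = φ̃(q_{t̃}(x)) for all x ∈ [-1,1], then t = t̃ and φ = φ̃ on V. -/
/-! Substituting `s = 1 - |x| ^ α`, the hypothesis reads `φ (-1 + 2ts) = φ' (-1 + 2t's)` for
`s ∈ [0,1]`. By symmetry let `t ≤ t'`, put `c = t / t'`, and let `A w = -1 + c (w + 1)`, which maps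
`[-1,1]` into itself because `0 ≤ c ≤ 1`. Then `φ ∘ A` and `φ'` agree on a nontrivial segment
starting at `-1`, so by the identity theorem along `[-1,1]` they agree at `1`
(`le_antisymm_aux`): `φ (A 1) = φ' 1 = 1 = φ 1`. Injectivity of `φ` gives `A 1 = 1`, that is
`t = t'`. Now `φ` and `φ'` agree on a segment, hence on all of the connected set `V`. -/

/-- The unimodal maps `q_t(x) = -2t|x|^α + 2t - 1` (real critical order `α`). -/
noncomputable def qmapR (α t x : ℝ) : ℝ := -2 * t * |x| ^ α + 2 * t - 1

/-- Agreement on a real segment to the right of `-1` gives the accumulation of agreement points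
at `-1` that the identity theorem requires. -/
lemma frequently_eq_of_right_segment (f g : ℂ → ℂ) (ε : ℝ) (hε : 0 < ε)
    (h : ∀ u ∈ Set.Ioo (0 : ℝ) ε, f (-1 + (u : ℂ)) = g (-1 + (u : ℂ))) :
    ∃ᶠ z in nhdsWithin (-1 : ℂ) {(-1 : ℂ)}ᶜ, f z = g z := by
  have hlim : Filter.Tendsto (fun u : ℝ => (-1 + (u : ℂ))) (nhdsWithin 0 (Set.Ioi 0))
      (nhdsWithin (-1 : ℂ) {(-1 : ℂ)}ᶜ) := by
    refine tendsto_nhdsWithin_iff.2 ⟨?_, ?_⟩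
    · have hc : Continuous (fun u : ℝ => (-1 + (u : ℂ))) := by fun_prop
      simpa using (hc.tendsto 0).mono_left nhdsWithin_le_nhds
    · filter_upwards [self_mem_nhdsWithin] with u hu
      simpa using (ne_of_gt hu : u ≠ 0)
  refine hlim.frequently (Filter.Eventually.frequently ?_)
  filter_upwards [Ioo_mem_nhdsGT hε] with u hu using h u hu

/-- The hypothesis after the substitution `s = 1 - |x| ^ α`. -/
lemma eq_of_param (α : ℝ) (hα : 1 < α) (φ φ' : ℂ → ℂ) (t t' : ℝ)
    (heq : ∀ x ∈ Set.Icc (-1 : ℝ) 1,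
      φ ((qmapR α t x : ℝ) : ℂ) = φ' ((qmapR α t' x : ℝ) : ℂ))
    (s : ℝ) (hs : s ∈ Set.Icc (0 : ℝ) 1) :
    φ (-1 + 2 * t * s) = φ' (-1 + 2 * t' * s) := by
  have h0 : 0 ≤ 1 - s := by linarith [hs.2]
  have hx0 : 0 ≤ (1 - s) ^ α⁻¹ := Real.rpow_nonneg h0 _
  have hx1 : (1 - s) ^ α⁻¹ ≤ 1 :=
    Real.rpow_le_one h0 (by linarith [hs.1]) (inv_nonneg.2 (by linarith))
  have hq : ∀ r : ℝ, ((qmapR α r ((1 - s) ^ α⁻¹) : ℝ) : ℂ) = -1 + 2 * r * s := by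
    intro r
    rw [qmapR, abs_of_nonneg hx0, Real.rpow_inv_rpow h0 (by linarith)]
    push_cast
    ring
  simpa only [hq] using heq _ ⟨by linarith, hx1⟩

/-- Under `t ≤ t'`, continuing the identity `φ ∘ A = φ'`, with `A w = -1 + (t / t') (w + 1)`,
along `[-1,1]` to the point `1` forces `t = t'`. -/
lemma le_antisymm_aux (V : Set ℂ) (hVo : IsOpen V)
    (hseg : (fun x : ℝ => (x : ℂ)) '' Set.Icc (-1 : ℝ) 1 ⊆ V)
    (φ φ' : ℂ → ℂ) (hφd : DifferentiableOn ℂ φ V) (hφi : Set.InjOn φ V)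
    (hφ'd : DifferentiableOn ℂ φ' V) (h2 : φ 1 = 1) (h4 : φ' 1 = 1)
    (t t' : ℝ) (ht : 0 < t) (htt : t ≤ t')
    (h : ∀ s ∈ Set.Icc (0 : ℝ) 1, φ (-1 + 2 * t * s) = φ' (-1 + 2 * t' * s)) :
    t = t' := by
  have ht' : 0 < t' := ht.trans_le htt
  set c : ℝ := t / t' with hc
  have hc0 : 0 ≤ c := by positivity
  have hc1 : c ≤ 1 := (div_le_one ht').2 htt
  have hct : c * t' = t := by rw [hc]; field_simp
  set I : Set ℂ := (fun x : ℝ => (x : ℂ)) '' Set.Icc (-1 : ℝ) 1 with hI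
  have hIpre : IsPreconnected I :=
    isPreconnected_Icc.image _ Complex.continuous_ofReal.continuousOn
  have hA : ∀ w ∈ I, (-1 + c * (w + 1) : ℂ) ∈ I := by
    rintro _ ⟨x, hx, rfl⟩
    refine ⟨-1 + c * (x + 1), ⟨?_, ?_⟩, by push_cast; ring⟩
    · nlinarith [hx.1]
    · nlinarith [hx.1, hx.2]
  have hm1 : (-1 : ℂ) ∈ I := ⟨-1, by norm_num, by norm_num⟩
  have hp1 : (1 : ℂ) ∈ I := ⟨1, by norm_num, by norm_num⟩
  have han : AnalyticOnNhd ℂ (fun w => φ (-1 + c * (w + 1))) I := by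
    intro w hw
    have h1 : AnalyticAt ℂ φ (-1 + c * (w + 1)) := hφd.analyticOnNhd hVo _ (hseg (hA w hw))
    exact AnalyticAt.fun_comp (f := fun w : ℂ => (-1 + c * (w + 1) : ℂ)) h1 (by fun_prop)
  have han' : AnalyticOnNhd ℂ φ' I := (hφ'd.analyticOnNhd hVo).mono hseg
  have hEq := han.eqOn_of_preconnected_of_frequently_eq han' hIpre hm1
    (frequently_eq_of_right_segment _ _ (2 * t') (by positivity) (by
      intro u hu
      have hs := h (u / (2 * t')) ⟨by have := hu.1; positivity,
        (div_le_one (by positivity)).2 hu.2.le⟩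
      have hne : (t' : ℂ) ≠ 0 := by exact_mod_cast ht'.ne'
      convert hs using 2
      · rw [← hct]; push_cast; field_simp; ring
      · push_cast; field_simp)) hp1
  have hφA : φ (-1 + c * (1 + 1)) = φ 1 := by
    exact Eq.trans hEq (h4.trans h2.symm)
  have hA1 := hφi (hseg (hA 1 hp1)) (hseg hp1) hφA
  have hcc : -1 + c * (1 + 1) = (1 : ℝ) := by exact_mod_cast hA1
  have : c = 1 := by linarith
  rw [this, one_mul] at hct
  exact hct.symm

/-- **Injectivity of the composition transformation `L(φ,t) = φ ∘ q_t`.**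
If `φ ∘ q_t = φ̃ ∘ q_{t̃}` on `[-1,1]`, where `φ, φ̃` are univalent on an open connected
set `V ⊇ [-1,1]` fixing `±1` and `t, t̃ ∈ (0,1]`, then `t = t̃` and `φ = φ̃` on `V`. -/
theorem stmt0 (α : ℝ) (hα : 1 < α)
    (V : Set ℂ) (hVo : IsOpen V) (hVc : IsConnected V)
    (hseg : (fun x : ℝ => (x : ℂ)) '' Set.Icc (-1 : ℝ) 1 ⊆ V)
    (φ φ' : ℂ → ℂ)
    (hφd : DifferentiableOn ℂ φ V) (hφi : Set.InjOn φ V)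
    (hφ'd : DifferentiableOn ℂ φ' V) (hφ'i : Set.InjOn φ' V)
    (h1 : φ (-1) = -1) (h2 : φ 1 = 1) (h3 : φ' (-1) = -1) (h4 : φ' 1 = 1)
    (t t' : ℝ) (ht : t ∈ Set.Ioc (0 : ℝ) 1) (ht' : t' ∈ Set.Ioc (0 : ℝ) 1)
    (heq : ∀ x ∈ Set.Icc (-1 : ℝ) 1,
      φ ((qmapR α t x : ℝ) : ℂ) = φ' ((qmapR α t' x : ℝ) : ℂ)) :
    t = t' ∧ Set.EqOn φ φ' V := by
  have h := eq_of_param α hα φ φ' t t' heq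
  have htt : t = t' := by
    rcases le_total t t' with hle | hle
    · exact le_antisymm_aux V hVo hseg φ φ' hφd hφi hφ'd h2 h4 t t' ht.1 hle h
    · exact (le_antisymm_aux V hVo hseg φ' φ hφ'd hφ'i hφd h4 h2 t' t ht'.1 hle
        (fun s hs => (h s hs).symm)).symm
  subst htt
  have ht0 : 0 < t := ht.1
  refine ⟨rfl, (hφd.analyticOnNhd hVo).eqOn_of_preconnected_of_frequently_eq
    (hφ'd.analyticOnNhd hVo) hVc.isPreconnected
    (hseg ⟨-1, by norm_num, by norm_num⟩ : (-1 : ℂ) ∈ V)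
    (frequently_eq_of_right_segment _ _ (2 * t) (by positivity) ?_)⟩
  intro u hu
  have hs := h (u / (2 * t)) ⟨by have := hu.1; positivity,
    (div_le_one (by positivity)).2 hu.2.le⟩
  have hne : (t : ℂ) ≠ 0 := by exact_mod_cast ht0.ne'
  convert hs using 2 <;> (push_cast; field_simp)
end

section
/- Fix an integer r ≥ 1. Let V ⊆ ℂ be an open connected set containing [-1,1], let φ : V → ℂ be univalent with φ(-1) = -1 and φ(1) = 1, and let t ∈ (0,1]. Let W ⊆ ℂ be an open connected set containing [-1,1] with q_t(W) ⊆ V. Suppose ω : V → ℂ is holomorphic with ω(-1) = ω(1) = 0 and v ∈ ℂ are such that ω(q_t(z)) + 2v · φ'(q_t(z)) · (1 - z^{2r}) = 0 for all z ∈ W. Then v = 0 and ω vanishes identically on V. -/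
/-!
Since `q_t(z) + 1 = 2t (1 - z^{2r})`, the hypothesis says that the holomorphic function
`g(y) = ω(y) + (v / t) φ'(y) (y + 1)` vanishes on `q_t(W)`. As `q_t(1) = -1` and
`q_t'(1) = -4rt ≠ 0`, the set `q_t(W)` is a neighbourhood of `-1`, so `g` vanishes on all of `V`
by the identity theorem. Evaluating at `y = 1` gives `(2 v / t) φ'(1) = 0`, and `φ'(1) ≠ 0` because
`φ` is injective (`deriv_ne_zero_of_injOn`). Hence `v = 0`, and then `ω = g = 0` on `V`.
-/

/-- The polynomial `q_t(z) = -2t z^{2r} + 2t - 1` for even critical order `2r`. -/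
noncomputable def qmapC (r : ℕ) (t z : ℂ) : ℂ := -2 * t * z ^ (2 * r) + 2 * t - 1

open Filter Topology

/-- A univalent function has nonvanishing derivative. If `f - f(a)` vanishes to order `n ≥ 2`
at `a`, then near `a` it is `h ^ n` with `h` a local homeomorphism sending `a` to `0`; so `f` takes
equal values at preimages under `h` of `w` and `ζ w`, for `ζ ≠ 1` an `n`-th root of unity. -/
theorem deriv_ne_zero_of_injOn {f : ℂ → ℂ} {U : Set ℂ} (hU : IsOpen U)
    (hf : DifferentiableOn ℂ f U) (hinj : Set.InjOn f U) {a : ℂ} (ha : a ∈ U) :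
    deriv f a ≠ 0 := by
  intro hd
  have hUa : U ∈ 𝓝 a := hU.mem_nhds ha
  have hfa : AnalyticAt ℂ f a := hf.analyticAt hUa
  have hnc : ¬ ∀ᶠ z in 𝓝 a, f z - f a = 0 := by
    intro h
    have h1 : ∀ᶠ z in 𝓝[≠] a, z = a := by
      filter_upwards [h.filter_mono nhdsWithin_le_nhds, nhdsWithin_le_nhds hUa] with z hz hzU
      exact hinj hzU ha (sub_eq_zero.1 hz)
    have h2 : ∀ᶠ z in 𝓝[≠] a, z ≠ a := self_mem_nhdsWithin
    obtain ⟨z, hz, hz'⟩ := (h1.and h2).exists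
    exact hz' hz
  obtain ⟨n, g, hg, hga, hfg⟩ :=
    (hfa.sub analyticAt_const).exists_eventuallyEq_pow_smul_nonzero_iff.2 hnc
  simp only [smul_eq_mul, Pi.sub_apply] at hfg
  have hn0 : n ≠ 0 := by
    rintro rfl
    have := hfg.self_of_nhds
    simp at this
    exact hga this.symm
  have hn1 : n ≠ 1 := by
    rintro rfl
    have h1 : HasDerivAt (fun z => (z - a) ^ 1 * g z) (g a) a := by
      have := ((hasDerivAt_id a).sub_const a).mul hg.differentiableAt.hasDerivAt
      simpa [pow_one, Pi.mul_def] using this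
    have h2 : HasDerivAt (fun z => f z - f a) (g a) a := h1.congr_of_eventuallyEq hfg
    have h3 := hfa.differentiableAt.hasDerivAt.sub_const (f a)
    exact hga ((h2.unique h3).trans hd)
  -- A local analytic `n`-th root `k` of `g`; dividing by `g a` stays near `1`,
  -- inside the domain of the principal branch.
  obtain ⟨k, hk, hka, hkg⟩ : ∃ k : ℂ → ℂ, AnalyticAt ℂ k a ∧ k a ≠ 0 ∧ ∀ z, k z ^ n = g z := by
    refine ⟨fun z => (g a) ^ ((n : ℂ)⁻¹) * (g z / g a) ^ ((n : ℂ)⁻¹), ?_, ?_, fun z => ?_⟩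
    · refine analyticAt_const.mul (AnalyticAt.cpow (hg.div analyticAt_const hga)
        analyticAt_const ?_)
      simp [div_self hga]
    · simp [Complex.cpow_eq_zero_iff, hga]
    · rw [mul_pow, Complex.cpow_nat_inv_pow _ hn0, Complex.cpow_nat_inv_pow _ hn0,
        mul_div_cancel₀ _ hga]
  have hh : HasStrictDerivAt (fun z => (z - a) * k z) (k a) a := by
    have hid : HasStrictDerivAt (fun z : ℂ => z - a) 1 a := (hasStrictDerivAt_id a).sub_const a
    have := hid.mul hk.hasStrictDerivAt
    simpa [Pi.mul_def] using this
  have hmap : map (fun z => (z - a) * k z) (𝓝 a) = 𝓝 0 := by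
    simpa using hh.map_nhds_eq hka
  set S : Set ℂ := {z | z ∈ U ∧ f z - f a = ((z - a) * k z) ^ n} with hS
  have hSa : S ∈ 𝓝 a := by
    filter_upwards [hUa, hfg] with z hz hz'
    exact ⟨hz, by rw [hz', mul_pow, hkg]⟩
  have hIm : ∀ᶠ w in 𝓝 (0 : ℂ), ∃ z ∈ S, (z - a) * k z = w := by
    rw [← hmap]
    exact image_mem_map hSa
  obtain ⟨ζ, hζ⟩ : ∃ ζ : ℂ, IsPrimitiveRoot ζ n := ⟨_, Complex.isPrimitiveRoot_exp n hn0⟩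
  have hIm' : ∀ᶠ w in 𝓝 (0 : ℂ), ∃ z ∈ S, (z - a) * k z = ζ * w := by
    have : Tendsto (fun w : ℂ => ζ * w) (𝓝 0) (𝓝 0) := by
      simpa using (continuous_const_mul ζ).tendsto 0
    exact this.eventually hIm
  have hne : ∀ᶠ w in 𝓝[≠] (0 : ℂ), w ≠ 0 := self_mem_nhdsWithin
  obtain ⟨w, ⟨⟨z₁, ⟨hz₁, hf₁⟩, e₁⟩, ⟨z₂, ⟨hz₂, hf₂⟩, e₂⟩⟩, hw⟩ :=
    (((hIm.and hIm').filter_mono nhdsWithin_le_nhds).and hne).exists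
  have hz : z₁ = z₂ := by
    apply hinj hz₁ hz₂
    rw [e₁] at hf₁
    rw [e₂, mul_pow, hζ.pow_eq_one, one_mul, ← hf₁] at hf₂
    exact (sub_left_injective hf₂).symm
  rw [← hz, e₁] at e₂
  have : ζ = 1 := (mul_eq_right₀ hw).1 e₂.symm
  exact hζ.ne_one (by omega) this

/-- **Injectivity of the derivative `DL(φ,t)` of the composition transformation.**
If `ω ∘ q_t + 2v ⬝ (φ' ∘ q_t) ⬝ (1 - z^{2r}) = 0` on an open connected set `W ⊇ [-1,1]`
with `q_t(W) ⊆ V`, where `φ` is univalent on `V` fixing `±1`, `ω` is holomorphic on `V`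
vanishing at `±1`, and `t ∈ (0,1]`, then `v = 0` and `ω ≡ 0` on `V`. -/
theorem stmt1 (r : ℕ) (hr : 1 ≤ r)
    (V : Set ℂ) (hVo : IsOpen V) (hVc : IsConnected V)
    (hsegV : (fun x : ℝ => (x : ℂ)) '' Set.Icc (-1 : ℝ) 1 ⊆ V)
    (φ : ℂ → ℂ) (hφd : DifferentiableOn ℂ φ V) (hφi : Set.InjOn φ V)
    (hφ1 : φ (-1) = -1) (hφ2 : φ 1 = 1)
    (t : ℝ) (ht : t ∈ Set.Ioc (0 : ℝ) 1)
    (W : Set ℂ) (hWo : IsOpen W) (hWc : IsConnected W)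
    (hsegW : (fun x : ℝ => (x : ℂ)) '' Set.Icc (-1 : ℝ) 1 ⊆ W)
    (hWV : (fun z => qmapC r (t : ℂ) z) '' W ⊆ V)
    (ω : ℂ → ℂ) (hωd : DifferentiableOn ℂ ω V) (hω1 : ω (-1) = 0) (hω2 : ω 1 = 0)
    (v : ℂ)
    (heq : ∀ z ∈ W,
      ω (qmapC r (t : ℂ) z) + 2 * v * deriv φ (qmapC r (t : ℂ) z) * (1 - z ^ (2 * r)) = 0) :
    v = 0 ∧ ∀ z ∈ V, ω z = 0 := by
  have ht0 : (t : ℂ) ≠ 0 := by exact_mod_cast ht.1.ne'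
  have hV1 : (1 : ℂ) ∈ V := hsegV ⟨1, by norm_num, by simp⟩
  have hVm1 : (-1 : ℂ) ∈ V := hsegV ⟨-1, by norm_num, by simp⟩
  have hW1 : (1 : ℂ) ∈ W := hsegW ⟨1, by norm_num, by simp⟩
  have hg : AnalyticOnNhd ℂ (fun y => ω y + v / t * deriv φ y * (y + 1)) V :=
    (hωd.analyticOnNhd hVo).add ((analyticOnNhd_const.mul (hφd.analyticOnNhd hVo).deriv).mul
      (analyticOnNhd_id.add analyticOnNhd_const))
  have hq : HasStrictDerivAt (qmapC r (t : ℂ)) (-2 * t * (2 * r)) 1 := by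
    have h : HasStrictDerivAt (qmapC r (t : ℂ)) _ 1 :=
      (((hasStrictDerivAt_pow (2 * r) (1 : ℂ)).const_mul (-2 * (t : ℂ))).add_const
        (2 * (t : ℂ))).sub_const 1
    convert h using 1
    simp
  have hq1 : qmapC r (t : ℂ) 1 = -1 := by simp [qmapC]
  have hq' : (-2 * t * (2 * r) : ℂ) ≠ 0 := by
    have : (r : ℂ) ≠ 0 := by exact_mod_cast (by omega : r ≠ 0)
    simp [ht0, this]
  have hmap : map (qmapC r (t : ℂ)) (𝓝 1) = 𝓝 (-1) := by
    rw [hq.map_nhds_eq hq', hq1]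
  have hev : (fun y => ω y + v / t * deriv φ y * (y + 1)) =ᶠ[𝓝 (-1)] 0 := by
    rw [← hmap, EventuallyEq, eventually_map]
    filter_upwards [hWo.mem_nhds hW1] with z hz
    have hz' : qmapC r (t : ℂ) z + 1 = 2 * t * (1 - z ^ (2 * r)) := by
      simp only [qmapC]; ring
    rw [hz', Pi.zero_apply, ← heq z hz]
    field_simp
  have hzero := hg.eqOn_zero_of_preconnected_of_eventuallyEq_zero hVc.isPreconnected hVm1 hev
  have hv : v = 0 := by
    have h1 := hzero hV1
    have hφ' := deriv_ne_zero_of_injOn hVo hφd hφi hV1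
    have h2 : (1 + 1 : ℂ) ≠ 0 := by norm_num
    simpa [hω2, ht0, hφ', h2] using h1
  refine ⟨hv, fun z hz => ?_⟩
  simpa [hv] using hzero hz
end

section
/- Fix an integer r ≥ 1. Let V ⊆ ℂ be an open connected set containing [-1,1], let φ : V → ℂ be univalent with φ(-1) = -1, φ(1) = 1 and φ'(1) ≠ 0, and let t ∈ (0,1]. Let W ⊆ ℂ be an open set containing [-1,1] with q_t(W) ⊆ V. Then for every polynomial ψ ∈ ℂ[y] with ψ(1) = 0, there exist a holomorphic map ω : V → ℂ with ω(-1) = ω(1) = 0 and a complex number v such that ω(q_t(z)) + 2v · φ'(q_t(z)) · (1 - z^{2r}) = ψ(z^{2r}) for all z ∈ W. -/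
/-- **Density of the image of `DL(φ,t)`.**
Every polynomial vector field of the form `z ↦ ψ(z^{2r})` with `ψ(1) = 0` is in the image of
`(ω, v) ↦ ω ∘ q_t + 2v ⬝ (φ' ∘ q_t) ⬝ (1 - z^{2r})`. -/
theorem stmt2 (r : ℕ) (hr : 1 ≤ r)
    (V : Set ℂ) (hVo : IsOpen V) (hVc : IsConnected V)
    (hsegV : (fun x : ℝ => (x : ℂ)) '' Set.Icc (-1 : ℝ) 1 ⊆ V)
    (φ : ℂ → ℂ) (hφd : DifferentiableOn ℂ φ V) (hφi : Set.InjOn φ V)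
    (hφ1 : φ (-1) = -1) (hφ2 : φ 1 = 1) (hφ' : deriv φ 1 ≠ 0)
    (t : ℝ) (ht : t ∈ Set.Ioc (0 : ℝ) 1)
    (W : Set ℂ) (hWo : IsOpen W)
    (hsegW : (fun x : ℝ => (x : ℂ)) '' Set.Icc (-1 : ℝ) 1 ⊆ W)
    (hWV : (fun z => qmapC r (t : ℂ) z) '' W ⊆ V)
    (ψ : Polynomial ℂ) (hψ : ψ.eval 1 = 0) :
    ∃ (ω : ℂ → ℂ) (v : ℂ),
      DifferentiableOn ℂ ω V ∧ ω (-1) = 0 ∧ ω 1 = 0 ∧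
      ∀ z ∈ W,
        ω (qmapC r (t : ℂ) z) + 2 * v * deriv φ (qmapC r (t : ℂ) z) * (1 - z ^ (2 * r))
          = ψ.eval (z ^ (2 * r)) := by
  have ht0 : (t : ℂ) ≠ 0 := by exact_mod_cast ht.1.ne'
  -- `v` solves `ω(1) = 0`, where `y(1) = (t - 1) / t` and `1 - y(1) = 1 / t`.
  refine ⟨fun w => ψ.eval ((2 * t - 1 - w) / (2 * t))
      - 2 * ((t : ℂ) * ψ.eval ((2 * (t : ℂ) - 1 - 1) / (2 * t)) / (2 * deriv φ 1)) * deriv φ w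
        * (1 - (2 * t - 1 - w) / (2 * t)),
    (t : ℂ) * ψ.eval ((2 * (t : ℂ) - 1 - 1) / (2 * t)) / (2 * deriv φ 1), ?_, ?_, ?_, ?_⟩
  · have hd : DifferentiableOn ℂ (deriv φ) V := hφd.deriv hVo
    have hy : DifferentiableOn ℂ (fun w : ℂ => (2 * (t : ℂ) - 1 - w) / (2 * t)) V := by fun_prop
    exact (ψ.differentiable.comp_differentiableOn hy).sub
      ((hd.const_mul _).mul (hy.const_sub 1))
  · have h1 : (2 * (t : ℂ) - 1 - -1) / (2 * t) = 1 := by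
      field_simp
      ring
    simp only [h1, hψ]
    ring
  · have h1 : 1 - (2 * (t : ℂ) - 1 - 1) / (2 * t) = 1 / t := by
      field_simp
      ring
    simp only [h1]
    generalize Polynomial.eval _ ψ = a
    field_simp
    ring
  · intro z _
    have h1 : (2 * (t : ℂ) - 1 - qmapC r t z) / (2 * t) = z ^ (2 * r) := by
      unfold qmapC
      field_simp
      ring
    simp only [h1]
    ring
end

section
/- For all real numbers ε and ε_1 with 0 < ε < ε_1, there exists a constant C > 0 such that every injective holomorphic map g : D_{ε_1} → ℂ with g(-1) = -1 and g(1) = 1 satisfies sup_{z ∈ D_ε} |g(z) - z| ≤ C. -/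
/-!
An injective holomorphic map `g` that omits the value `w` on a convex open set `U` can be written
`g = w + exp u` with `u` holomorphic on `U`. As `g` is injective, `u` never takes two values that
differ by `2πi`, so `u(U)` contains no disc of radius greater than `2π`. Bloch's theorem
(`bloch_of_closedBall`) says that `u` maps a disc of radius `R` about `c` onto a set containing a
disc of radius `R |u'(c)| / 48`; hence `R |u'(c)| ≤ 96π` (`norm_deriv_log_le`). Integrating this,
`|g(z) - w| ≤ exp (96π |z - p| / δ) |g(p) - w|` whenever `z` and `p` lie in a convex part of `U`
at distance at least `δ` from the boundary (`norm_sub_omitted_le`).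

The half `{Re z > -1}` of the stadium is convex, and `g` omits the value `-1` there, by
injectivity. Comparing `z` with `p = 1`, where `g(p) + 1 = 2`, bounds `g` on the part
`{Re z ≥ 0}` of the smaller stadium; the other part follows by applying this to `z ↦ -g(-z)`.
-/

/-- The interval `[-1,1]` viewed as a subset of `ℂ`. -/
def realSeg : Set ℂ := (fun x : ℝ => (x : ℂ)) '' Set.Icc (-1 : ℝ) 1

/-- The `a`-stadium: points at distance `< a` from `[-1,1]`. -/
def stadium (a : ℝ) : Set ℂ := {z : ℂ | Metric.infDist z realSeg < a}

open Metric Set Complex Filter Topology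

/-! ### Bloch's theorem -/

/-- Quantitative inverse function theorem: if `|u'| ≤ 2 |u'(a)|` on a disc about `a`, then by the
Schwarz lemma `u'` is close to `u'(a)` on the concentric disc of one sixth of the radius, so `u` is
close to its linearization there. -/
lemma ball_subset_image_of_norm_deriv_le {u : ℂ → ℂ} {a : ℂ} {ρ : ℝ} (hρ : 0 < ρ)
    (hu : DifferentiableOn ℂ u (ball a ρ)) (ha : deriv u a ≠ 0)
    (hb : ∀ z ∈ ball a ρ, ‖deriv u z‖ ≤ 2 * ‖deriv u a‖) :
    ball (u a) (ρ * ‖deriv u a‖ / 12 / 2) ⊆ u '' ball a ρ := by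
  have hsub : closedBall a (ρ / 6) ⊆ ball a ρ := closedBall_subset_ball (by linarith)
  have hat : ∀ z ∈ ball a ρ, DifferentiableAt ℂ u z := fun z hz =>
    hu.differentiableAt (isOpen_ball.mem_nhds hz)
  have hmaps : MapsTo (deriv u) (ball a ρ) (closedBall (deriv u a) (3 * ‖deriv u a‖)) := by
    intro z hz
    rw [mem_closedBall, dist_eq_norm]
    have := norm_sub_le (deriv u z) (deriv u a)
    linarith [hb z hz]
  have hclose : ∀ z ∈ closedBall a (ρ / 6), ‖deriv u z - deriv u a‖ ≤ ‖deriv u a‖ / 2 := by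
    intro z hz
    have h := dist_le_div_mul_dist_of_mapsTo_ball (hu.deriv isOpen_ball) hmaps (hsub hz)
    rw [dist_eq_norm] at h
    refine h.trans ?_
    rw [mem_closedBall] at hz
    calc 3 * ‖deriv u a‖ / ρ * dist z a ≤ 3 * ‖deriv u a‖ / ρ * (ρ / 6) := by gcongr
      _ = ‖deriv u a‖ / 2 := by field_simp; norm_num
  have hlow : ∀ z ∈ sphere a (ρ / 6), ρ * ‖deriv u a‖ / 12 ≤ ‖u z - u a‖ := by
    intro z hz
    have h := (convex_closedBall a (ρ / 6)).norm_image_sub_le_of_norm_hasDerivWithin_le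
      (f := fun z => u z - deriv u a * z) (f' := fun z => deriv u z - deriv u a)
      (fun x hx => by
        have h1 := (hat x (hsub hx)).hasDerivAt
        have h2 := (hasDerivAt_id x).const_mul (deriv u a)
        rw [mul_one] at h2
        exact (h1.sub h2).hasDerivWithinAt)
      hclose (mem_closedBall_self (by positivity)) (sphere_subset_closedBall hz)
    have hz' : ‖z - a‖ = ρ / 6 := by rw [← dist_eq_norm]; exact hz
    have h3 : ‖deriv u a * (z - a)‖ = ‖deriv u a‖ * (ρ / 6) := by rw [norm_mul, hz']
    have h4 := norm_sub_norm_le (deriv u a * (z - a)) (deriv u a * (z - a) - (u z - u a))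
    have h5 : deriv u a * (z - a) - (deriv u a * (z - a) - (u z - u a)) = u z - u a := by ring
    have h6 : ‖deriv u a * (z - a) - (u z - u a)‖
        = ‖(u z - deriv u a * z) - (u a - deriv u a * a)‖ := by
      rw [← norm_neg]; congr 1; ring
    rw [h5, h6, h3] at h4
    rw [hz'] at h
    linarith
  have hfreq : ∃ᶠ z in 𝓝 a, u z ≠ u a :=
    ((hat a (mem_ball_self hρ)).hasDerivAt.eventually_ne ha).frequently.filter_mono
      nhdsWithin_le_nhds
  have hdc : DiffContOnCl ℂ u (ball a (ρ / 6)) := hu.diffContOnCl_ball hsub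
  exact (hdc.ball_subset_image_closedBall (by positivity) hlow hfreq).trans (image_mono hsub)

/-- Bloch's theorem. -/
lemma bloch_of_closedBall {u : ℂ → ℂ} {U : Set ℂ} (hU : IsOpen U) (hu : DifferentiableOn ℂ u U)
    {c : ℂ} {R : ℝ} (hR : 0 < R) (hc : closedBall c R ⊆ U) (hd : deriv u c ≠ 0) :
    ∃ a ∈ U, ball (u a) (R * ‖deriv u c‖ / 48) ⊆ u '' U := by
  -- The centre `a` maximizes `(R - |z - c|) |u'(z)|`; this makes `|u'| ≤ 2 |u'(a)|` near `a`.
  obtain ⟨a, haR, hmax⟩ := (isCompact_closedBall c R).exists_isMaxOn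
    ⟨c, mem_closedBall_self hR.le⟩ (f := fun z => (R - dist z c) * ‖deriv u z‖)
    ((continuousOn_const.sub (continuous_id.dist continuous_const).continuousOn).mul
      (((hu.deriv hU).continuousOn.mono hc).norm))
  have hmax' : ∀ z ∈ closedBall c R,
      (R - dist z c) * ‖deriv u z‖ ≤ (R - dist a c) * ‖deriv u a‖ := hmax
  have hcc := hmax' c (mem_closedBall_self hR.le)
  rw [dist_self, sub_zero] at hcc
  have hpos : 0 < R * ‖deriv u c‖ := mul_pos hR (norm_pos_iff.2 hd)
  have hda : dist a c ≤ R := haR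
  have hne : deriv u a ≠ 0 := by
    intro h
    rw [h, norm_zero, mul_zero] at hcc
    linarith
  have hρ : 0 < (R - dist a c) / 2 := by
    rcases hda.lt_or_eq with h | h
    · linarith
    · rw [h, sub_self, zero_mul] at hcc
      linarith
  set ρ := (R - dist a c) / 2 with hρdef
  have hdist : ∀ z ∈ ball a ρ, ρ ≤ R - dist z c := by
    intro z hz
    have := dist_triangle z a c
    have hz' : dist z a < ρ := hz
    linarith
  have hsub : ball a ρ ⊆ closedBall c R := by
    intro z hz
    have := hdist z hz
    rw [mem_closedBall]
    linarith
  refine ⟨a, hc haR, ?_⟩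
  refine (ball_subset_ball ?_).trans ((ball_subset_image_of_norm_deriv_le hρ
    (hu.mono (hsub.trans hc)) hne ?_).trans (image_mono (hsub.trans hc)))
  · have : R - dist a c = 2 * ρ := by rw [hρdef]; ring
    rw [this] at hcc
    linarith
  · intro z hz
    have h1 := hmax' z (hsub hz)
    have h2 : ρ * ‖deriv u z‖ ≤ (R - dist z c) * ‖deriv u z‖ := by
      gcongr
      exact hdist z hz
    have h3 : ρ * ‖deriv u z‖ ≤ ρ * (2 * ‖deriv u a‖) := by
      calc ρ * ‖deriv u z‖ ≤ (R - dist a c) * ‖deriv u a‖ := h2.trans h1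
        _ = ρ * (2 * ‖deriv u a‖) := by rw [hρdef]; ring
    exact le_of_mul_le_mul_left h3 hρ

/-! ### Injective maps omitting a value -/

lemma norm_deriv_log_le {u : ℂ → ℂ} {U : Set ℂ} (hU : IsOpen U) (hu : DifferentiableOn ℂ u U)
    (hinj : InjOn (fun z => exp (u z)) U) {c : ℂ} {R : ℝ} (hR : 0 < R)
    (hc : closedBall c R ⊆ U) : ‖deriv u c‖ ≤ 96 * Real.pi / R := by
  by_contra! hlt
  rw [div_lt_iff₀ hR] at hlt
  have hd : deriv u c ≠ 0 := by
    intro h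
    rw [h, norm_zero, zero_mul] at hlt
    linarith [Real.pi_pos]
  obtain ⟨a, haU, hball⟩ := bloch_of_closedBall hU hu hR hc hd
  -- The image disc about `u a` has radius greater than `2π`, so it contains `u a + 2πi`.
  have hmem : u a + 2 * Real.pi * I ∈ ball (u a) (R * ‖deriv u c‖ / 48) := by
    rw [mem_ball, dist_eq_norm, add_sub_cancel_left]
    have : ‖(2 * Real.pi * I : ℂ)‖ = 2 * Real.pi := by
      simp [abs_of_pos Real.pi_pos]
    rw [this]
    linarith
  obtain ⟨b, hbU, hb⟩ := hball hmem
  have hab : b = a := hinj hbU haU (by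
    change exp (u b) = exp (u a)
    rw [hb, exp_add, exp_two_pi_mul_I, mul_one])
  rw [hab] at hb
  exact two_pi_I_ne_zero (left_eq_add.1 hb)

/-- A holomorphic branch of the logarithm of a nonvanishing function on a convex open set. -/
lemma exists_log_of_convex {f : ℂ → ℂ} {U : Set ℂ} (hU : IsOpen U) (hUc : Convex ℝ U)
    (hUn : U.Nonempty) (hf : DifferentiableOn ℂ f U) (h0 : ∀ z ∈ U, f z ≠ 0) :
    ∃ u : ℂ → ℂ, DifferentiableOn ℂ u U ∧ ∀ z ∈ U, exp (u z) = f z := by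
  have hsc : IsSimplyConnected U := by
    have := hUc.contractibleSpace hUn
    exact (inferInstance : SimplyConnectedSpace U)
  obtain ⟨u, huc, hu⟩ := exists_continuousOn_eqOn_exp_comp hsc hU hf.continuousOn
    (by rintro ⟨z, hz, h⟩; exact h0 z hz h)
  refine ⟨u, fun z hz => ?_, fun z hz => hu hz⟩
  have hn := hU.mem_nhds hz
  exact (HasDerivAt.of_comp_left (huc.continuousAt hn) (hasDerivAt_exp (u z))
    (hf.differentiableAt hn).hasDerivAt (exp_ne_zero _)
    (hu.eventuallyEq_of_mem hn)).differentiableAt.differentiableWithinAt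

/-- Harnack-type comparison of the distances to an omitted value, with a constant that does not
depend on the map. -/
lemma norm_sub_omitted_le {g : ℂ → ℂ} {U V : Set ℂ} (hU : IsOpen U) (hUc : Convex ℝ U)
    (hg : DifferentiableOn ℂ g U) (hinj : InjOn g U) {w : ℂ} (hw : ∀ z ∈ U, g z ≠ w)
    (hV : Convex ℝ V) {δ : ℝ} (hδ : 0 < δ) (hVU : ∀ z ∈ V, closedBall z δ ⊆ U)
    {p z : ℂ} (hp : p ∈ V) (hz : z ∈ V) :
    ‖g z - w‖ ≤ Real.exp (96 * Real.pi / δ * ‖z - p‖) * ‖g p - w‖ := by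
  have hsub : V ⊆ U := fun x hx => hVU x hx (mem_closedBall_self hδ.le)
  obtain ⟨u, hu, hexp⟩ := exists_log_of_convex hU hUc ⟨p, hsub hp⟩ (hg.sub_const w)
    (fun x hx => sub_ne_zero.2 (hw x hx))
  have hinj' : InjOn (fun x => exp (u x)) U := by
    intro x hx y hy hxy
    change exp (u x) = exp (u y) at hxy
    rw [hexp x hx, hexp y hy] at hxy
    exact hinj hx hy (sub_left_injective hxy)
  have hmv := hV.norm_image_sub_le_of_norm_deriv_le
    (fun x hx => hu.differentiableAt (hU.mem_nhds (hsub hx)))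
    (fun x hx => norm_deriv_log_le hU hu hinj' hδ (hVU x hx)) hp hz
  rw [← hexp z (hsub hz), ← hexp p (hsub hp), norm_exp, norm_exp, ← Real.exp_add]
  have := (re_le_norm (u z - u p)).trans hmv
  rw [sub_re] at this
  exact Real.exp_le_exp.2 (by linarith)

/-! ### The stadium -/

lemma mem_stadium {a : ℝ} {z : ℂ} :
    z ∈ stadium a ↔ ∃ x : ℝ, (-1 ≤ x ∧ x ≤ 1) ∧ ‖z - x‖ < a := by
  have hne : realSeg.Nonempty := ⟨_, mem_image_of_mem _ (left_mem_Icc.2 (by norm_num))⟩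
  unfold stadium
  rw [mem_ofPred_eq, infDist_lt_iff hne]
  simp [realSeg, dist_eq_norm]

lemma stadium_eq_thickening (a : ℝ) : stadium a = thickening a realSeg := by
  ext z
  rw [mem_stadium, mem_thickening_iff]
  simp [realSeg, dist_eq_norm]

lemma isOpen_stadium (a : ℝ) : IsOpen (stadium a) := by
  rw [stadium_eq_thickening]; exact isOpen_thickening

lemma convex_stadium (a : ℝ) : Convex ℝ (stadium a) := by
  rw [stadium_eq_thickening]
  exact ((convex_Icc (-1 : ℝ) 1).linear_image ofRealCLM.toLinearMap).thickening a

lemma neg_mem_stadium {a : ℝ} {z : ℂ} (hz : z ∈ stadium a) : -z ∈ stadium a := by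
  obtain ⟨x, ⟨h1, h2⟩, hx⟩ := mem_stadium.1 hz
  refine mem_stadium.2 ⟨-x, ⟨by linarith, by linarith⟩, ?_⟩
  have h : -z - ((-x : ℝ) : ℂ) = -(z - x) := by push_cast; ring
  rwa [h, norm_neg]

lemma norm_sub_one_le {a : ℝ} {z : ℂ} (hz : z ∈ stadium a) : ‖z - 1‖ ≤ a + 2 := by
  obtain ⟨x, ⟨h1, h2⟩, hx⟩ := mem_stadium.1 hz
  have h3 : ‖((x : ℂ) - 1)‖ ≤ 2 := by
    rw [← ofReal_one, ← ofReal_sub, norm_real, Real.norm_eq_abs, abs_le]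
    constructor <;> linarith
  have := norm_sub_le_norm_sub_add_norm_sub z x 1
  linarith

lemma norm_add_one_le_of_re_nonneg {ε ε₁ : ℝ} (hε : 0 < ε) (hεε₁ : ε < ε₁) {g : ℂ → ℂ}
    (hg : DifferentiableOn ℂ g (stadium ε₁)) (hinj : InjOn g (stadium ε₁))
    (hm : g (-1) = -1) (h1 : g 1 = 1) {z : ℂ} (hz : z ∈ stadium ε) (hre : 0 ≤ z.re) :
    ‖g z + 1‖ ≤
      Real.exp (96 * Real.pi / min ((ε₁ - ε) / 2) (1 / 2) * (ε + 2)) * 2 := by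
  set δ := min ((ε₁ - ε) / 2) (1 / 2) with hδdef
  have hδ : 0 < δ := lt_min (by linarith) (by norm_num)
  have hδ1 : δ ≤ (ε₁ - ε) / 2 := min_le_left _ _
  have hδ2 : δ ≤ 1 / 2 := min_le_right _ _
  have hone : (1 : ℂ) ∈ stadium ε := mem_stadium.2 ⟨1, by norm_num, by simpa using hε⟩
  have hmone : (-1 : ℂ) ∈ stadium ε₁ :=
    mem_stadium.2 ⟨-1, by norm_num, by simpa using hε.trans hεε₁⟩
  have key := norm_sub_omitted_le (g := g) (U := stadium ε₁ ∩ {z | -1 < z.re})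
    (V := stadium ε ∩ {z | 0 ≤ z.re}) (w := -1) (δ := δ) (p := 1) (z := z)
    ((isOpen_stadium _).inter (isOpen_lt continuous_const continuous_re))
    ((convex_stadium _).inter (convex_halfSpace_re_gt _))
    (hg.mono inter_subset_left) (hinj.mono inter_subset_left) ?_
    ((convex_stadium _).inter (convex_halfSpace_re_ge _)) hδ ?_ ⟨hone, by simp⟩ ⟨hz, hre⟩
  · rw [sub_neg_eq_add, sub_neg_eq_add, h1] at key
    refine key.trans ?_
    have h2 : ‖(1 + 1 : ℂ)‖ = 2 := by norm_num
    rw [h2]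
    have := norm_sub_one_le hz
    have := Real.pi_pos
    gcongr
  · rintro x ⟨hx, hxre⟩ hgx
    have : x = -1 := hinj hx hmone (by rw [hgx, hm])
    rw [this] at hxre
    simp at hxre
  · rintro x ⟨hx, hxre⟩ y hy
    rw [mem_closedBall, dist_eq_norm] at hy
    constructor
    · obtain ⟨t, ht, hxt⟩ := mem_stadium.1 hx
      refine mem_stadium.2 ⟨t, ht, ?_⟩
      have := norm_sub_le_norm_sub_add_norm_sub y x t
      linarith
    · have h3 := (abs_le.1 ((abs_re_le_norm (y - x)).trans hy)).1
      rw [sub_re] at h3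
      change 0 ≤ x.re at hxre
      change -1 < y.re
      linarith

/-- **Uniform bound for univalent maps fixing `±1` (Montel).**
For `0 < ε < ε₁` there is `C > 0` such that every injective holomorphic map
`g : D_{ε₁} → ℂ` with `g(-1) = -1` and `g(1) = 1` satisfies `|g(z) - z| ≤ C` on `D_ε`. -/
theorem stmt7 (ε ε₁ : ℝ) (hε : 0 < ε) (hεε₁ : ε < ε₁) :
    ∃ C : ℝ, 0 < C ∧
      ∀ g : ℂ → ℂ,
        DifferentiableOn ℂ g (stadium ε₁) → Set.InjOn g (stadium ε₁) →
        g (-1) = -1 → g 1 = 1 →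
        ∀ z ∈ stadium ε, ‖g z - z‖ ≤ C := by
  set M := Real.exp (96 * Real.pi / min ((ε₁ - ε) / 2) (1 / 2) * (ε + 2)) * 2 with hM
  have hMpos : 0 < M := by positivity
  have main : ∀ g : ℂ → ℂ, DifferentiableOn ℂ g (stadium ε₁) → InjOn g (stadium ε₁) →
      g (-1) = -1 → g 1 = 1 → ∀ z ∈ stadium ε, 0 ≤ z.re → ‖g z - z‖ ≤ M + (ε + 2) + 2 := by
    intro g hg hinj hm h1 z hz hre
    have h2 := norm_add_one_le_of_re_nonneg hε hεε₁ hg hinj hm h1 hz hre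
    have h3 := norm_sub_one_le hz
    have h4 : g z - z = (g z + 1) - (z - 1) - 2 := by ring
    have h5 := norm_sub_le ((g z + 1) - (z - 1)) 2
    have h6 := norm_sub_le (g z + 1) (z - 1)
    have h7 : ‖(2 : ℂ)‖ = 2 := by norm_num
    rw [h4]
    linarith
  refine ⟨M + (ε + 2) + 2, by positivity, fun g hg hinj hm h1 z hz => ?_⟩
  rcases le_total 0 z.re with hre | hre
  · exact main g hg hinj hm h1 z hz hre
  · have h := main (fun z => -g (-z))
      ((hg.comp differentiable_neg.differentiableOn fun x hx => neg_mem_stadium hx).neg)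
      (fun x hx y hy hxy => neg_injective
        (hinj (neg_mem_stadium hx) (neg_mem_stadium hy) (neg_injective hxy)))
      (by simp [h1]) (by simp [hm]) (-z) (neg_mem_stadium hz) (by simpa using hre)
    have h' : -g (- -z) - -z = -(g z - z) := by rw [neg_neg]; ring
    rwa [h', norm_neg] at h
end
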